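/- Let q ∈ (0,1] and let (σ_T)_{T≥1} be positive reals with σ_T² ≥ c·T for some c > 0 and all sufficiently large T. For x ∈ {0,1} let M_{1:T}(x) be the product of T independent copies of the law of x·B + η, where B ∼ Bernoulli(q) and η ∼ N(0, σ_T²) are independent, and let M'_{1:T}(x) be the product of T independent copies of N(q·x, σ_T²). Then sup_{x∈{0,1}} TV(M_{1:T}(x), M'_{1:T}(x)) → 0 as T → ∞. Equivalently, TV((q·N(1,σ_T²) + (1−q)·N(0,σ_T²))^{⊗T}, N(q,σ_T²)^{⊗T}) → 0 as T → ∞. -/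

import Mathlib

open MeasureTheory ProbabilityTheory Real Filter Topology

/-- Total variation distance between two measures:
`TV(P,Q) = sup_A |P(A) − Q(A)|` over measurable sets `A`. -/
noncomputable def tvDist {α : Type*} [MeasurableSpace α] (P Q : Measure α) : ℝ :=
  ⨆ A : {s : Set α // MeasurableSet s}, |(P A.1).toReal - (Q A.1).toReal|

/-- The mixture measure `q·N(1,σ²) + (1−q)·N(0,σ²)`. -/
noncomputable def mixGauss (σ q : ℝ) : Measure ℝ :=
  ENNReal.ofReal q • gaussianReal 1 (σ ^ 2).toNNReal
    + ENNReal.ofReal (1 - q) • gaussianReal 0 (σ ^ 2).toNNReal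

/-!
This is the `χ²` method. If `P` has density `f` with respect to `Q`, then `P A - Q A` is the
integral of `f - 1` over `A`, so Cauchy–Schwarz gives `TV(P, Q)² ≤ ∫ f² dQ - 1`, and the second
moment `∫ f² dQ` is multiplicative over product measures.

For a location mixture `P = ρ ∗ N(0, v)` and `Q = N(a, v)`, the density of `P` is the average over
`m ∼ ρ` of the likelihood ratio of `N(m, v)` against `Q`, and Ingster's identity computes the second
moment as `E exp ((m - a) (m' - a) / v)` for independent `m, m' ∼ ρ`. When `a` is the mean of `ρ`,
the first-order term of the exponential vanishes, so that the second moment is at most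
`1 + (Var ρ / v)²`. Over `T` factors the squared distance is thus `O(T / v²)`.
-/

open scoped ENNReal NNReal

section ProductMeasure

theorem lintegral_fin_prod_eq_prod {n : ℕ} {α : Fin n → Type*} [∀ i, MeasurableSpace (α i)]
    (μ : ∀ i, Measure (α i)) [∀ i, SigmaFinite (μ i)] {f : ∀ i, α i → ℝ≥0∞}
    (hf : ∀ i, Measurable (f i)) :
    ∫⁻ x, ∏ i, f i (x i) ∂Measure.pi μ = ∏ i, ∫⁻ x, f i x ∂μ i := by
  induction n with
  | zero => simp
  | succ n ih =>
    have hsplit := (measurePreserving_piFinSuccAbove μ 0).symm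
    have htail : Measurable fun x : ∀ i : Fin n, α i.succ => ∏ i, f i.succ (x i) :=
      Finset.measurable_prod _ fun i _ => (hf i.succ).comp (measurable_pi_apply i)
    rw [← hsplit.lintegral_comp_emb (MeasurableEquiv.measurableEmbedding _), Fin.prod_univ_succ,
      ← ih _ fun i => hf i.succ, ← lintegral_prod_mul (hf 0).aemeasurable htail.aemeasurable]
    simp_rw [MeasurableEquiv.piFinSuccAbove_symm_apply, Fin.insertNthEquiv, Equiv.coe_fn_mk,
      Fin.prod_univ_succ, Fin.insertNth_zero, Fin.cons_zero, Fin.cons_succ]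
    rfl

variable {ι : Type*} [Fintype ι] {α : ι → Type*} [∀ i, MeasurableSpace (α i)]

theorem lintegral_pi_prod_eq_prod (μ : ∀ i, Measure (α i)) [∀ i, SigmaFinite (μ i)]
    {f : ∀ i, α i → ℝ≥0∞} (hf : ∀ i, Measurable (f i)) :
    ∫⁻ x, ∏ i, f i (x i) ∂Measure.pi μ = ∏ i, ∫⁻ x, f i x ∂μ i := by
  let e := (Fintype.equivFin ι).symm
  rw [← (measurePreserving_piCongrLeft μ e).lintegral_comp_emb
    (MeasurableEquiv.measurableEmbedding _)]
  simp_rw [← e.prod_comp, MeasurableEquiv.coe_piCongrLeft, Equiv.piCongrLeft_apply_apply]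
  exact lintegral_fin_prod_eq_prod _ fun i => hf (e i)

theorem pi_withDensity (μ : ∀ i, Measure (α i)) [∀ i, SigmaFinite (μ i)] {f : ∀ i, α i → ℝ≥0∞}
    (hf : ∀ i, Measurable (f i)) [∀ i, SigmaFinite ((μ i).withDensity (f i))] :
    Measure.pi (fun i => (μ i).withDensity (f i)) =
      (Measure.pi μ).withDensity fun x => ∏ i, f i (x i) := by
  refine Measure.pi_eq fun s hs => ?_
  rw [withDensity_apply _ (.univ_pi hs), Measure.restrict_pi_pi, lintegral_pi_prod_eq_prod _ hf]
  exact Finset.prod_congr rfl fun i _ => (withDensity_apply _ (hs i)).symm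

end ProductMeasure

section SecondMoment

/-- The second moment `∫ (dP/dQ)² dQ` of the likelihood ratio of `P` against `Q`. If `P ≪ Q` are
probability measures, this is `1 + χ²(P ‖ Q)`; in general it only sees the absolutely continuous
part of `P`. -/
noncomputable def rnDerivSecondMoment {α : Type*} [MeasurableSpace α] (P Q : Measure α) : ℝ≥0∞ :=
  ∫⁻ x, P.rnDeriv Q x ^ 2 ∂Q

theorem rnDerivSecondMoment_withDensity {α : Type*} [MeasurableSpace α] (Q : Measure α)
    [SigmaFinite Q] {f : α → ℝ≥0∞} (hf : Measurable f) :
    rnDerivSecondMoment (Q.withDensity f) Q = ∫⁻ x, f x ^ 2 ∂Q :=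
  lintegral_congr_ae <| (Q.rnDeriv_withDensity hf).mono fun x hx => by simp only [hx]

section Pi

variable {ι : Type*} [Fintype ι] {α : ι → Type*} [∀ i, MeasurableSpace (α i)]
  {P Q : ∀ i, Measure (α i)} [∀ i, SigmaFinite (P i)] [∀ i, SigmaFinite (Q i)]

theorem pi_eq_withDensity_prod_rnDeriv (h : ∀ i, P i ≪ Q i) :
    Measure.pi P = (Measure.pi Q).withDensity fun x => ∏ i, (P i).rnDeriv (Q i) (x i) := by
  have hP (i) : (Q i).withDensity ((P i).rnDeriv (Q i)) = P i :=
    Measure.withDensity_rnDeriv_eq _ _ (h i)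
  have (i : ι) : SigmaFinite ((Q i).withDensity ((P i).rnDeriv (Q i))) := by
    rw [hP]; infer_instance
  have hprod := pi_withDensity Q fun i => Measure.measurable_rnDeriv (P i) (Q i)
  rwa [funext hP] at hprod

theorem pi_absolutelyContinuous_pi (h : ∀ i, P i ≪ Q i) : Measure.pi P ≪ Measure.pi Q :=
  pi_eq_withDensity_prod_rnDeriv h ▸ withDensity_absolutelyContinuous _ _

theorem rnDerivSecondMoment_pi (h : ∀ i, P i ≪ Q i) :
    rnDerivSecondMoment (Measure.pi P) (Measure.pi Q) = ∏ i, rnDerivSecondMoment (P i) (Q i) := by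
  rw [pi_eq_withDensity_prod_rnDeriv h, rnDerivSecondMoment_withDensity _ (by fun_prop)]
  simp only [← Finset.prod_pow]
  exact lintegral_pi_prod_eq_prod Q fun i => (Measure.measurable_rnDeriv (P i) (Q i)).pow_const 2

end Pi

section TotalVariation

variable {α : Type*} [MeasurableSpace α] {P Q : Measure α}

theorem sq_integral_le_integral_sq {μ : Measure α} [IsProbabilityMeasure μ] {X : α → ℝ}
    (hX : MemLp X 2 μ) : (∫ x, X x ∂μ) ^ 2 ≤ ∫ x, X x ^ 2 ∂μ :=
  sub_nonneg.1 <| (variance_nonneg X μ).trans_eq (variance_eq_sub hX)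

theorem memLp_two_toReal_rnDeriv (hfin : rnDerivSecondMoment P Q ≠ ∞) :
    MemLp (fun x => (P.rnDeriv Q x).toReal) 2 Q := by
  have hmeas : Measurable (P.rnDeriv Q) := Measure.measurable_rnDeriv P Q
  rw [memLp_two_iff_integrable_sq hmeas.ennreal_toReal.aestronglyMeasurable]
  simpa only [ENNReal.toReal_pow] using
    integrable_toReal_of_lintegral_ne_top (hmeas.pow_const 2).aemeasurable hfin

theorem tvDist_nonneg : 0 ≤ tvDist P Q :=
  Real.iSup_nonneg fun _ => abs_nonneg _

theorem tvDist_le_integral_abs_rnDeriv_sub_one [IsFiniteMeasure P] [IsFiniteMeasure Q] (h : P ≪ Q) :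
    tvDist P Q ≤ ∫ x, |(P.rnDeriv Q x).toReal - 1| ∂Q := by
  have hint : Integrable (fun x => (P.rnDeriv Q x).toReal - 1) Q :=
    Measure.integrable_toReal_rnDeriv.sub (integrable_const 1)
  have : Nonempty {s : Set α // MeasurableSet s} := ⟨⟨∅, .empty⟩⟩
  refine ciSup_le fun ⟨A, _⟩ => ?_
  calc |(P A).toReal - (Q A).toReal|
      = |∫ x in A, ((P.rnDeriv Q x).toReal - 1) ∂Q| := by
        rw [integral_sub Measure.integrable_toReal_rnDeriv.integrableOn (integrable_const 1),
          Measure.setIntegral_toReal_rnDeriv h]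
        simp [measureReal_def]
    _ ≤ ∫ x in A, |(P.rnDeriv Q x).toReal - 1| ∂Q := abs_integral_le_integral_abs
    _ ≤ ∫ x, |(P.rnDeriv Q x).toReal - 1| ∂Q :=
        setIntegral_le_integral hint.abs (.of_forall fun _ => abs_nonneg _)

variable [IsProbabilityMeasure P] [IsProbabilityMeasure Q]

theorem variance_toReal_rnDeriv (h : P ≪ Q) (hfin : rnDerivSecondMoment P Q ≠ ∞) :
    Var[fun x => (P.rnDeriv Q x).toReal; Q] = (rnDerivSecondMoment P Q).toReal - 1 := by
  have hmeas : Measurable fun x => P.rnDeriv Q x ^ 2 := by fun_prop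
  rw [variance_eq_sub (memLp_two_toReal_rnDeriv hfin), Measure.integral_toReal_rnDeriv h,
    rnDerivSecondMoment, ← integral_toReal hmeas.aemeasurable (ae_lt_top hmeas hfin)]
  simp

theorem ofReal_one_add_sq_tvDist_le (h : P ≪ Q) :
    ENNReal.ofReal (1 + tvDist P Q ^ 2) ≤ rnDerivSecondMoment P Q := by
  obtain hfin | hfin := eq_or_ne (rnDerivSecondMoment P Q) ∞
  · exact hfin ▸ le_top
  rw [ENNReal.ofReal_le_iff_le_toReal hfin, ← le_sub_iff_add_le', ← variance_toReal_rnDeriv h hfin]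
  have hL2 := memLp_two_toReal_rnDeriv hfin
  set f := fun x => (P.rnDeriv Q x).toReal
  have hmean : ∫ x, f x ∂Q = 1 := by simp [f, Measure.integral_toReal_rnDeriv h]
  calc tvDist P Q ^ 2 ≤ (∫ x, |f x - 1| ∂Q) ^ 2 :=
        pow_le_pow_left₀ tvDist_nonneg (tvDist_le_integral_abs_rnDeriv_sub_one h) 2
    _ ≤ ∫ x, |f x - 1| ^ 2 ∂Q := sq_integral_le_integral_sq (hL2.sub (memLp_const 1)).abs
    _ = Var[f; Q] := by simp_rw [variance_eq_integral hL2.aemeasurable, hmean, sq_abs]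

end TotalVariation

end SecondMoment

theorem lintegral_ofReal_exp_le {Ω : Type*} [MeasurableSpace Ω] {μ : Measure Ω}
    [IsProbabilityMeasure μ] {X : Ω → ℝ} (hX : AEMeasurable X μ)
    (hbound : ∀ᵐ ω ∂μ, |X ω| ≤ 1) :
    ∫⁻ ω, ENNReal.ofReal (rexp (X ω)) ∂μ ≤
      ENNReal.ofReal (1 + ∫ ω, X ω ∂μ + ∫ ω, X ω ^ 2 ∂μ) := by
  have hL2 : MemLp X 2 μ := .of_bound hX.aestronglyMeasurable 1 hbound
  have hlin : Integrable (fun ω => 1 + X ω) μ :=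
    (integrable_const 1).add (hL2.integrable one_le_two)
  have hexp : ∀ᵐ ω ∂μ, rexp (X ω) ≤ 1 + X ω + X ω ^ 2 := hbound.mono fun ω hω => by
    linarith [(abs_le.1 (Real.abs_exp_sub_one_sub_id_le hω)).2]
  calc ∫⁻ ω, ENNReal.ofReal (rexp (X ω)) ∂μ
      ≤ ∫⁻ ω, ENNReal.ofReal (1 + X ω + X ω ^ 2) ∂μ :=
        lintegral_mono_ae (hexp.mono fun _ hω => ENNReal.ofReal_le_ofReal hω)
    _ = ENNReal.ofReal (∫ ω, (1 + X ω + X ω ^ 2) ∂μ) :=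
        (ofReal_integral_eq_lintegral_ofReal (hlin.add hL2.integrable_sq)
          (hexp.mono fun _ hω => (Real.exp_nonneg _).trans hω)).symm
    _ = ENNReal.ofReal (1 + ∫ ω, X ω ∂μ + ∫ ω, X ω ^ 2 ∂μ) := by
        rw [integral_add hlin hL2.integrable_sq,
          integral_add (integrable_const 1) (hL2.integrable one_le_two)]
        simp

section LocationMixture

/-- The likelihood ratio of `N(m, v)` against `N(a, v)` at `x`, for `v ≠ 0`. -/
noncomputable def gaussianLR (a v m x : ℝ) : ℝ≥0∞ :=
  ENNReal.ofReal (rexp ((m - a) * (x - a) / v - (m - a) ^ 2 / (2 * v)))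

theorem measurable_gaussianLR (a v : ℝ) : Measurable fun z : ℝ × ℝ => gaussianLR a v z.1 z.2 := by
  unfold gaussianLR; fun_prop

theorem gaussianReal_withDensity_gaussianLR (a m : ℝ) {v : ℝ≥0} (hv : v ≠ 0) :
    (gaussianReal a v).withDensity (gaussianLR a v m) = gaussianReal m v := by
  rw [gaussianReal_of_var_ne_zero _ hv, gaussianReal_of_var_ne_zero _ hv,
    ← withDensity_mul _ (measurable_gaussianPDF _ _) (measurable_gaussianLR a v).of_uncurry_left]
  congr 1 with x
  rw [Pi.mul_apply, gaussianPDF, gaussianPDF, gaussianLR,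
    ← ENNReal.ofReal_mul (gaussianPDFReal_nonneg _ _ _), gaussianPDFReal, gaussianPDFReal,
    mul_assoc (√(2 * π * v))⁻¹, ← Real.exp_add]
  congr 3
  field_simp
  ring

theorem lintegral_gaussianLR (a m : ℝ) {v : ℝ≥0} (hv : v ≠ 0) :
    ∫⁻ x, gaussianLR a v m x ∂gaussianReal a v = 1 := by
  rw [← setLIntegral_univ, ← withDensity_apply _ .univ, gaussianReal_withDensity_gaussianLR _ _ hv,
    measure_univ]

theorem gaussianLR_mul_gaussianLR (a m m' x : ℝ) {v : ℝ} (hv : v ≠ 0) :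
    gaussianLR a v m x * gaussianLR a v m' x =
      ENNReal.ofReal (rexp ((m - a) * (m' - a) / v)) * gaussianLR a v (m + m' - a) x := by
  simp only [gaussianLR, ← ENNReal.ofReal_mul (Real.exp_nonneg _), ← Real.exp_add]
  congr 2
  field_simp
  ring

variable (ρ : Measure ℝ) (a : ℝ) {v : ℝ≥0}

theorem conv_gaussianReal_eq_withDensity [SFinite ρ] (hv : v ≠ 0) :
    ρ ∗ gaussianReal 0 v =
      (gaussianReal a v).withDensity fun x => ∫⁻ m, gaussianLR a v m x ∂ρ := by
  ext s hs
  have hshift (m : ℝ) : ∫⁻ y, s.indicator 1 (m + y) ∂gaussianReal 0 v = gaussianReal m v s := by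
    rw [← lintegral_map (measurable_one.indicator hs) (measurable_const_add m),
      gaussianReal_map_const_add, zero_add, lintegral_indicator_one hs]
  calc (ρ ∗ gaussianReal 0 v) s = ∫⁻ m, gaussianReal m v s ∂ρ := by
        rw [← lintegral_indicator_one hs, Measure.lintegral_conv (measurable_one.indicator hs)]
        exact lintegral_congr hshift
    _ = ∫⁻ m, ∫⁻ x in s, gaussianLR a v m x ∂gaussianReal a v ∂ρ := by
        simp_rw [← withDensity_apply _ hs, gaussianReal_withDensity_gaussianLR _ _ hv]
    _ = ∫⁻ x in s, ∫⁻ m, gaussianLR a v m x ∂ρ ∂gaussianReal a v :=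
        lintegral_lintegral_swap (measurable_gaussianLR a v).aemeasurable
    _ = _ := (withDensity_apply _ hs).symm

theorem rnDerivSecondMoment_conv_gaussianReal [SFinite ρ] (hv : v ≠ 0) :
    rnDerivSecondMoment (ρ ∗ gaussianReal 0 v) (gaussianReal a v) =
      ∫⁻ z, ENNReal.ofReal (rexp ((z.1 - a) * (z.2 - a) / v)) ∂ρ.prod ρ := by
  have hLR := measurable_gaussianLR a v
  rw [conv_gaussianReal_eq_withDensity ρ a hv,
    rnDerivSecondMoment_withDensity _ hLR.lintegral_prod_left']
  calc ∫⁻ x, (∫⁻ m, gaussianLR a v m x ∂ρ) ^ 2 ∂gaussianReal a v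
      = ∫⁻ x, ∫⁻ z, gaussianLR a v z.1 x * gaussianLR a v z.2 x ∂ρ.prod ρ ∂gaussianReal a v := by
        refine lintegral_congr fun x => ?_
        have hx : AEMeasurable (gaussianLR a v · x) ρ := hLR.of_uncurry_right.aemeasurable
        rw [sq, lintegral_prod_mul hx hx]
    _ = ∫⁻ z, ∫⁻ x, gaussianLR a v z.1 x * gaussianLR a v z.2 x ∂gaussianReal a v ∂ρ.prod ρ := by
        refine lintegral_lintegral_swap (Measurable.aemeasurable ?_)
        exact (hLR.comp (f := fun p : ℝ × ℝ × ℝ => (p.2.1, p.1)) (by fun_prop)).mul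
          (hLR.comp (f := fun p : ℝ × ℝ × ℝ => (p.2.2, p.1)) (by fun_prop))
    _ = ∫⁻ z, ENNReal.ofReal (rexp ((z.1 - a) * (z.2 - a) / v)) ∂ρ.prod ρ := by
        refine lintegral_congr fun z => ?_
        simp_rw [gaussianLR_mul_gaussianLR a _ _ _ (NNReal.coe_ne_zero.2 hv)]
        rw [lintegral_const_mul _ hLR.of_uncurry_left, lintegral_gaussianLR _ _ hv, mul_one]

variable {a} [IsProbabilityMeasure ρ] {D : ℝ}

theorem rnDerivSecondMoment_conv_gaussianReal_le (ha : ∫ m, m ∂ρ = a)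
    (hD : ∀ᵐ m ∂ρ, |m - a| ≤ D) (hv : v ≠ 0) (hDv : D ^ 2 ≤ v) :
    rnDerivSecondMoment (ρ ∗ gaussianReal 0 v) (gaussianReal a v) ≤
      ENNReal.ofReal (1 + (Var[id; ρ] / v) ^ 2) := by
  let X : ℝ × ℝ → ℝ := fun z => (z.1 - a) * (z.2 - a) / v
  have hbound : ∀ᵐ z ∂ρ.prod ρ, |X z| ≤ 1 := by
    filter_upwards [Measure.quasiMeasurePreserving_fst.ae hD,
      Measure.quasiMeasurePreserving_snd.ae hD] with z h₁ h₂
    rw [abs_div, abs_mul, NNReal.abs_eq]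
    refine div_le_one_of_le₀ ?_ v.coe_nonneg
    calc |z.1 - a| * |z.2 - a| ≤ D * D := mul_le_mul h₁ h₂ (abs_nonneg _) ((abs_nonneg _).trans h₁)
      _ ≤ v := sq D ▸ hDv
  have hcentered : ∫ m, (m - a) ∂ρ = 0 := by
    have hint : Integrable (fun m => m - a) ρ := .of_bound (by fun_prop) D hD
    have hid : Integrable (fun m => m) ρ :=
      (hint.add (integrable_const a)).congr (.of_forall fun m => sub_add_cancel m a)
    simp [integral_sub hid (integrable_const a), ha]
  have hmean : ∫ z, X z ∂ρ.prod ρ = 0 := by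
    rw [integral_div, integral_prod_mul (fun m => m - a) (fun m => m - a), hcentered, zero_mul,
      zero_div]
  have hsq : ∫ z, X z ^ 2 ∂ρ.prod ρ = (Var[id; ρ] / v) ^ 2 := by
    simp only [X, div_pow, mul_pow]
    rw [integral_div, integral_prod_mul (fun m => (m - a) ^ 2) (fun m => (m - a) ^ 2),
      variance_eq_integral aemeasurable_id, sq (∫ m, _ ∂ρ)]
    simp only [id, ha]
  have hX : AEMeasurable X (ρ.prod ρ) := by fun_prop
  simpa only [rnDerivSecondMoment_conv_gaussianReal ρ a hv, hmean, hsq, add_zero] using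
    lintegral_ofReal_exp_le hX hbound

theorem sq_tvDist_pi_conv_gaussianReal_le (ha : ∫ m, m ∂ρ = a) (hD : ∀ᵐ m ∂ρ, |m - a| ≤ D)
    (hv : v ≠ 0) (hDv : D ^ 2 ≤ v) (T : ℕ) :
    tvDist (Measure.pi fun _ : Fin T => ρ ∗ gaussianReal 0 v)
      (Measure.pi fun _ : Fin T => gaussianReal a v) ^ 2 ≤
      rexp (T * (Var[id; ρ] / v) ^ 2) - 1 := by
  have hac : ρ ∗ gaussianReal 0 v ≪ gaussianReal a v :=
    conv_gaussianReal_eq_withDensity ρ a hv ▸ withDensity_absolutelyContinuous _ _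
  set ε := (Var[id; ρ] / v) ^ 2
  rw [le_sub_iff_add_le', ← ENNReal.ofReal_le_ofReal_iff (Real.exp_nonneg _)]
  calc _ ≤ rnDerivSecondMoment (Measure.pi fun _ : Fin T => ρ ∗ gaussianReal 0 v)
        (Measure.pi fun _ : Fin T => gaussianReal a v) :=
        ofReal_one_add_sq_tvDist_le (pi_absolutelyContinuous_pi fun _ => hac)
    _ = rnDerivSecondMoment (ρ ∗ gaussianReal 0 v) (gaussianReal a v) ^ T := by
        rw [rnDerivSecondMoment_pi fun _ => hac, Finset.prod_const, Finset.card_fin]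
    _ ≤ ENNReal.ofReal (rexp ε) ^ T := by
        gcongr
        refine (rnDerivSecondMoment_conv_gaussianReal_le ρ ha hD hv hDv).trans ?_
        exact ENNReal.ofReal_le_ofReal (add_comm 1 ε ▸ Real.add_one_le_exp ε)
    _ = ENNReal.ofReal (rexp (T * ε)) := by
        rw [← ENNReal.ofReal_pow (Real.exp_nonneg _), ← Real.exp_nat_mul]

theorem tv_prod_mixture_gaussian_tendsto_zero_general (ha : ∫ m, m ∂ρ = a)
    (hD : ∀ᵐ m ∂ρ, |m - a| ≤ D) {v : ℕ → ℝ≥0}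
    (hv : (fun T : ℕ => √(T : ℝ)) =o[atTop] fun T => (v T : ℝ)) :
    Tendsto
      (fun T : ℕ =>
        tvDist (Measure.pi fun _ : Fin T => ρ ∗ gaussianReal 0 (v T))
          (Measure.pi fun _ : Fin T => gaussianReal a (v T)))
      atTop (𝓝 0) := by
  have hsqrt : Tendsto (fun T : ℕ => √(T : ℝ)) atTop atTop :=
    Real.tendsto_sqrt_atTop.comp tendsto_natCast_atTop_atTop
  have hv_top : Tendsto (fun T => (v T : ℝ)) atTop atTop := by
    simpa only [NNReal.norm_eq] using
      hv.isBigO.trans_tendsto_norm_atTop (tendsto_norm_atTop_atTop.comp hsqrt)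
  have hexponent : Tendsto (fun T : ℕ => T * (Var[id; ρ] / v T) ^ 2) atTop (𝓝 0) := by
    have h := (hv.tendsto_div_nhds_zero.const_mul Var[id; ρ]).pow 2
    rw [mul_zero, zero_pow two_ne_zero] at h
    refine h.congr fun T => ?_
    rw [mul_pow, div_pow, Real.sq_sqrt T.cast_nonneg, div_pow]
    ring
  have hbound : Tendsto (fun T : ℕ => √(rexp (T * (Var[id; ρ] / v T) ^ 2) - 1)) atTop (𝓝 0) := by
    have hcont : Continuous fun x => √(rexp x - 1) := by fun_prop
    simpa [Function.comp_def] using (hcont.tendsto 0).comp hexponent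
  refine squeeze_zero' (.of_forall fun _ => tvDist_nonneg) ?_ hbound
  filter_upwards [hv_top.eventually_gt_atTop 0, hv_top.eventually_ge_atTop (D ^ 2)] with T hpos hDv
  exact Real.le_sqrt_of_sq_le <|
    sq_tvDist_pi_conv_gaussianReal_le ρ ha hD (NNReal.coe_pos.1 hpos).ne' hDv T

end LocationMixture

section Bernoulli

variable (q : unitInterval)

theorem mixGauss_eq_bernoulliMeasure_conv (σ : ℝ) :
    mixGauss σ q = Ber((1 : ℝ), 0, q) ∗ gaussianReal 0 (σ ^ 2).toNNReal := by
  have hweight (p : unitInterval) : ENNReal.ofReal p = unitInterval.toNNReal p :=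
    ENNReal.ofReal_coe_nnreal (p := unitInterval.toNNReal p)
  simp only [mixGauss, bernoulliMeasure_def, Measure.add_conv, ← Measure.coe_nnreal_smul,
    Measure.conv_smul_left, Measure.dirac_conv, gaussianReal_map_const_add, zero_add, ← hweight,
    unitInterval.coe_symm_eq, Measure.map_id']

theorem ae_abs_sub_le_one_bernoulliMeasure :
    ∀ᵐ m ∂Ber((1 : ℝ), 0, q), |m - (q : ℝ)| ≤ 1 := by
  have hone : |1 - (q : ℝ)| ≤ 1 := abs_le.2 ⟨by linarith [q.2.2], by linarith [q.2.1]⟩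
  have hzero : |0 - (q : ℝ)| ≤ 1 := abs_le.2 ⟨by linarith [q.2.2], by linarith [q.2.1]⟩
  rw [bernoulliMeasure_def, ae_add_measure_iff]
  exact ⟨Measure.ae_smul_measure (by simpa using hone) _,
    Measure.ae_smul_measure (by simpa using hzero) _⟩

end Bernoulli

theorem sqrt_natCast_isLittleO_of_mul_le {c : ℝ} (hc : 0 < c) {v : ℕ → ℝ}
    (hv : ∀ᶠ T : ℕ in atTop, c * T ≤ v T) :
    (fun T : ℕ => √(T : ℝ)) =o[atTop] v := by
  have hsqrt : (fun T : ℕ => √(T : ℝ)) =o[atTop] fun T : ℕ => (T : ℝ) := by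
    simpa [Function.comp_def] using
      (Asymptotics.isLittleO_pow_pow_atTop_of_lt one_lt_two).comp_tendsto
        (Real.tendsto_sqrt_atTop.comp tendsto_natCast_atTop_atTop)
  refine hsqrt.trans_isBigO (.of_bound c⁻¹ (hv.mono fun T hT => ?_))
  rw [Real.norm_natCast, inv_mul_eq_div, le_div_iff₀' hc]
  exact hT.trans (le_abs_self _)

/-- If `σ_T² ≥ c·T` eventually (for some `c > 0`), then the total variation distance between
the `T`-fold product of the subsampled Gaussian mechanism's output distribution
`q·N(1,σ_T²) + (1−q)·N(0,σ_T²)` and the `T`-fold product of `N(q,σ_T²)` tends to `0`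
as `T → ∞`. -/
theorem tv_prod_mixture_gaussian_tendsto_zero
    (q : ℝ) (hq : q ∈ Set.Ioc (0 : ℝ) 1) (σ : ℕ → ℝ) (hσ : ∀ T, 1 ≤ T → 0 < σ T)
    (c : ℝ) (hc : 0 < c) (hgrowth : ∀ᶠ T : ℕ in atTop, c * T ≤ (σ T) ^ 2) :
    Tendsto
      (fun T : ℕ =>
        tvDist (Measure.pi fun _ : Fin T => mixGauss (σ T) q)
          (Measure.pi fun _ : Fin T => gaussianReal q ((σ T) ^ 2).toNNReal))
      atTop (𝓝 0) := by
  let p : unitInterval := ⟨q, hq.1.le, hq.2⟩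
  have hmean : ∫ m, m ∂Ber((1 : ℝ), 0, p) = q := by simp [p, integral_bernoulliMeasure]
  have hv : (fun T : ℕ => √(T : ℝ)) =o[atTop] fun T => ((σ T ^ 2).toNNReal : ℝ) := by
    simpa only [Real.coe_toNNReal _ (sq_nonneg _)] using sqrt_natCast_isLittleO_of_mul_le hc hgrowth
  simpa only [← mixGauss_eq_bernoulliMeasure_conv] using
    tv_prod_mixture_gaussian_tendsto_zero_general _ hmean (ae_abs_sub_le_one_bernoulliMeasure p) hv
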